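/- arXiv:1804.03949 — 2 statements merged into one kernel-verified Lean document; each statement's English description precedes it below -/
import Mathlib

section
/- For all positive integers n and q and any set S of positive integers: 2^q F_{n,S} = sum_{l=0}^n binom(n,l) F_{l,S} (sum_{i=0}^{n-l} {n-l brace i}_S (q)_i) + sum_{l=1}^{q-1} 2^{q-l-1} (sum_{i=0}^n {n brace i}_S (l)_i). -/
open scoped Classical

/-- The `S`-restricted Stirling number of the second kind: the number of partitions of
`[n]` into exactly `k` nonempty blocks, all of whose sizes lie in `S`. -/
noncomputable def sStirling (S : Set ℕ) (n k : ℕ) : ℕ :=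
  Nat.card {P : Finpartition (Finset.univ : Finset (Fin n)) //
    P.parts.card = k ∧ ∀ b ∈ P.parts, b.card ∈ S}

/-- The formal power series `E_S(x) = ∑_{s ∈ S} x^s / s!`. -/
noncomputable def ES (S : Set ℕ) : PowerSeries ℚ :=
  PowerSeries.mk fun n => if n ∈ S then ((n.factorial : ℚ))⁻¹ else 0

/-- The `S`-restricted Fubini number: the number of ordered set partitions of `[n]`
with all block sizes in `S`. -/
noncomputable def sFubini (S : Set ℕ) (n : ℕ) : ℕ :=
  ∑ k ∈ Finset.range (n + 1), k.factorial * sStirling S n k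

/-- Families of pairwise disjoint sets with sizes in `S`, `k` members, union `A`. -/
noncomputable def famT {α : Type} [Fintype α] (S : Set ℕ) (A : Finset α) (k : ℕ) :
    Finset (Finset (Finset α)) :=
  Finset.univ.filter fun C => C.card = k ∧ (∀ b ∈ C, b.card ∈ S) ∧
    (C : Set (Finset α)).PairwiseDisjoint id ∧ C.sup id = A

theorem famT_rec {α : Type} [Fintype α] (S : Set ℕ) (hS : 0 ∉ S) (A : Finset α) (k : ℕ) :
    (k + 1) * (famT S A (k + 1)).card =
      ∑ b ∈ A.powerset, (if b.card ∈ S then 1 else 0) * (famT S (A \ b) k).card := by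
  have h1 : ((famT S A (k+1)).sigma fun C => C).card = (k + 1) * (famT S A (k + 1)).card := by
    rw [Finset.card_sigma, Finset.sum_const_nat (m := k + 1), mul_comm]
    intro C hC
    simp only [famT, Finset.mem_filter] at hC
    exact hC.2.1
  have h2 : ((A.powerset.filter fun b => b.card ∈ S).sigma fun b => famT S (A \ b) k).card =
      ∑ b ∈ A.powerset, (if b.card ∈ S then 1 else 0) * (famT S (A \ b) k).card := by
    rw [Finset.card_sigma, Finset.sum_filter]
    refine Finset.sum_congr rfl fun b _ => ?_
    split_ifs <;> simp
  rw [← h1, ← h2]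
  have key : ∀ (b : Finset α) (D : Finset (Finset α)), b ⊆ A → b.card ∈ S → D ∈ famT S (A \ b) k →
      b ∉ D := by
    intro b D hb hbS hD hbD
    simp only [famT, Finset.mem_filter, Finset.mem_univ, true_and] at hD
    have : b ≤ A \ b := by
      rw [← hD.2.2.2]; exact Finset.le_sup (f := id) hbD
    have h0 : b = ∅ := by
      ext x
      constructor
      · intro hx
        have := this hx
        simp [hx] at this
      · simp
    subst h0
    exact hS (by simpa using hbS)
  refine Finset.card_bij' (fun p _ => ⟨p.2, p.1.erase p.2⟩) (fun p _ => ⟨insert p.1 p.2, p.1⟩)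
    ?_ ?_ ?_ ?_
  · rintro ⟨C, b⟩ h
    simp only [famT, Finset.mem_sigma, Finset.mem_filter, Finset.mem_univ, true_and,
      Finset.mem_powerset] at h ⊢
    obtain ⟨⟨hc, hs, hd, hu⟩, hb⟩ := h
    refine ⟨⟨?_, hs b hb⟩, ?_, ?_, ?_, ?_⟩
    · rw [← hu]; exact Finset.le_sup (f := id) hb
    · rw [Finset.card_erase_of_mem hb, hc]; rfl
    · exact fun x hx => hs x (Finset.mem_of_mem_erase hx)
    · exact hd.subset (by simp)
    · ext x
      rw [← hu]
      simp only [Finset.mem_sup, Finset.mem_sdiff, Finset.mem_erase, id]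
      constructor
      · rintro ⟨v, ⟨hvb, hv⟩, hx⟩
        refine ⟨⟨v, hv, hx⟩, fun hxb => ?_⟩
        exact (Finset.disjoint_left.1 (hd hv hb hvb)) hx hxb
      · rintro ⟨⟨v, hv, hx⟩, hxb⟩
        exact ⟨v, ⟨fun h => hxb (h ▸ hx), hv⟩, hx⟩
  · rintro ⟨b, D⟩ h
    simp only [Finset.mem_sigma, Finset.mem_filter, Finset.mem_powerset] at h
    obtain ⟨⟨hb, hbS⟩, hD⟩ := h
    have hbD := key b D hb hbS hD
    simp only [famT, Finset.mem_filter, Finset.mem_univ, true_and, Finset.mem_sigma] at hD ⊢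
    obtain ⟨hc, hs, hd, hu⟩ := hD
    refine ⟨⟨?_, ?_, ?_, ?_⟩, Finset.mem_insert_self _ _⟩
    · rw [Finset.card_insert_of_notMem hbD, hc]
    · intro x hx
      rcases Finset.mem_insert.1 hx with rfl | hx
      · exact hbS
      · exact hs x hx
    · rw [Finset.coe_insert]
      refine hd.insert fun j hj _ => ?_
      have : j ≤ A \ b := by rw [← hu]; exact Finset.le_sup (f := id) hj
      exact Finset.disjoint_of_subset_right this Finset.disjoint_sdiff
    · rw [Finset.sup_insert, hu]
      exact Finset.union_sdiff_of_subset hb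
  · rintro ⟨C, b⟩ h
    simp only [Finset.mem_sigma] at h
    simp [Finset.insert_erase h.2]
  · rintro ⟨b, D⟩ h
    simp only [Finset.mem_sigma, Finset.mem_filter, Finset.mem_powerset] at h
    simp [Finset.erase_insert (key b D h.1.1 h.1.2 h.2)]

theorem famT_coeff {α : Type} [Fintype α] (S : Set ℕ) (hS : 0 ∉ S) (k : ℕ) :
    ∀ A : Finset α, (k.factorial : ℚ) * ((famT S A k).card : ℚ) =
      (A.card.factorial : ℚ) * PowerSeries.coeff A.card (ES S ^ k) := by
  induction k with
  | zero =>
    intro A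
    rw [pow_zero, PowerSeries.coeff_one]
    by_cases hA : A = ∅
    · subst hA
      have : famT S (∅ : Finset α) 0 = {∅} := by
        ext C
        simp only [famT, Finset.mem_filter, Finset.mem_univ, true_and, Finset.card_eq_zero,
          Finset.mem_singleton]
        constructor
        · exact fun h => h.1
        · rintro rfl; simp
      simp [this]
    · have : famT S A 0 = ∅ := by
        ext C
        simp only [famT, Finset.mem_filter, Finset.mem_univ, true_and, Finset.card_eq_zero,
          Finset.notMem_empty, iff_false]
        rintro ⟨rfl, -, -, h⟩
        exact hA (by simpa using h.symm)
      simp [this, hA]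
  | succ k ih =>
    intro A
    have h := congrArg (Nat.cast : ℕ → ℚ) (famT_rec S hS A k)
    push_cast at h
    have h3 : (k.factorial : ℚ) * (∑ b ∈ A.powerset, (if b.card ∈ S then 1 else 0) *
        ((famT S (A \ b) k).card : ℚ)) = ∑ b ∈ A.powerset, (fun j => (if j ∈ S then (1 : ℚ) else 0) *
        (((A.card - j).factorial : ℚ) * PowerSeries.coeff (A.card - j) (ES S ^ k))) b.card := by
      rw [Finset.mul_sum]
      refine Finset.sum_congr rfl fun b hb => ?_
      have := ih (A \ b)
      rw [Finset.card_sdiff_of_subset (Finset.mem_powerset.1 hb)] at this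
      simp only
      rw [← this]; ring
    rw [Finset.sum_powerset_apply_card (fun j => (if j ∈ S then (1 : ℚ) else 0) *
      (((A.card - j).factorial : ℚ) * PowerSeries.coeff (A.card - j) (ES S ^ k)))] at h3
    rw [Nat.factorial_succ, pow_succ', PowerSeries.coeff_mul,
      Finset.Nat.sum_antidiagonal_eq_sum_range_succ_mk, Finset.mul_sum]
    push_cast
    rw [show ((k : ℚ) + 1) * k.factorial * ((famT S A (k+1)).card : ℚ) =
      k.factorial * (((k : ℚ) + 1) * ((famT S A (k+1)).card : ℚ)) by ring, h, h3]
    refine Finset.sum_congr rfl fun j hj => ?_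
    have hj' : j ≤ A.card := by simpa [Nat.lt_succ_iff] using hj
    rw [nsmul_eq_mul, ES, PowerSeries.coeff_mk, Nat.cast_choose ℚ hj']
    split_ifs
    · field_simp
    · simp

theorem sStirling_eq (S : Set ℕ) (hS : 0 ∉ S) (n k : ℕ) :
    sStirling S n k = (famT S (Finset.univ : Finset (Fin n)) k).card := by
  rw [sStirling, ← Nat.card_eq_finsetCard]
  have hd : ∀ C : Finset (Finset (Fin n)),
      (C : Set (Finset (Fin n))).PairwiseDisjoint id ↔ C.SupIndep id := fun C =>
    Finset.supIndep_iff_pairwiseDisjoint.symm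
  refine Nat.card_congr
    { toFun := fun P => ⟨P.1.parts, ?_⟩
      invFun := fun C => ⟨⟨C.1, ?_, ?_, ?_⟩, ?_⟩
      left_inv := ?_
      right_inv := ?_ }
  · simp only [famT, Finset.mem_filter, Finset.mem_univ, true_and]
    exact ⟨P.2.1, P.2.2, (hd _).2 P.1.supIndep, by convert P.1.sup_parts⟩
  · have h := C.2
    simp only [famT, Finset.mem_filter, Finset.mem_univ, true_and] at h
    exact (hd _).1 h.2.2.1
  · have h := C.2
    simp only [famT, Finset.mem_filter, Finset.mem_univ, true_and] at h
    convert h.2.2.2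
  · have h := C.2
    simp only [famT, Finset.mem_filter, Finset.mem_univ, true_and] at h
    intro hb
    exact hS (by simpa using h.2.1 _ hb)
  · have h := C.2
    simp only [famT, Finset.mem_filter, Finset.mem_univ, true_and] at h
    exact ⟨h.1, h.2.1⟩
  · intro P
    rfl
  · intro C
    rfl

theorem sStirling_coeff (S : Set ℕ) (hS : 0 ∉ S) (n k : ℕ) :
    (k.factorial : ℚ) * (sStirling S n k : ℚ) =
      (n.factorial : ℚ) * PowerSeries.coeff n (ES S ^ k) := by
  rw [sStirling_eq S hS, famT_coeff S hS k Finset.univ]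
  simp

theorem ES_const (S : Set ℕ) (hS : 0 ∉ S) : PowerSeries.constantCoeff (ES S) = 0 := by
  rw [← PowerSeries.coeff_zero_eq_constantCoeff_apply, ES, PowerSeries.coeff_mk, if_neg hS]

theorem ES_pow_mul_coeff (S : Set ℕ) (hS : 0 ∉ S) (n k : ℕ) (h : n < k) (G : PowerSeries ℚ) :
    PowerSeries.coeff n (ES S ^ k * G) = 0 := by
  have h1 : (PowerSeries.X : PowerSeries ℚ) ^ k ∣ ES S ^ k * G :=
    (pow_dvd_pow_of_dvd (PowerSeries.X_dvd_iff.2 (ES_const S hS)) k).mul_right G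
  exact PowerSeries.X_pow_dvd_iff.1 h1 n h

theorem one_sub_ES (S : Set ℕ) (hS : 0 ∉ S) : (1 - ES S) * (1 - ES S)⁻¹ = 1 := by
  apply PowerSeries.mul_inv_cancel
  simp [ES_const S hS]

theorem sFubini_coeff (S : Set ℕ) (hS : 0 ∉ S) (n : ℕ) :
    (sFubini S n : ℚ) = (n.factorial : ℚ) * PowerSeries.coeff n ((1 - ES S)⁻¹) := by
  have h1 : (1 - ES S)⁻¹ = ∑ k ∈ Finset.range (n + 1), ES S ^ k +
      ES S ^ (n + 1) * (1 - ES S)⁻¹ := by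
    have h := geom_sum_mul (ES S) (n + 1)
    have h' := one_sub_ES S hS
    linear_combination (1 - ES S)⁻¹ * h + (∑ k ∈ Finset.range (n + 1), ES S ^ k) * h'
  rw [h1, map_add, ES_pow_mul_coeff S hS n (n + 1) (by omega), add_zero, map_sum, sFubini,
    Finset.mul_sum]
  push_cast
  exact Finset.sum_congr rfl fun k _ => sStirling_coeff S hS n k

theorem sumA_coeff (S : Set ℕ) (hS : 0 ∉ S) (m q : ℕ) :
    ((∑ i ∈ Finset.range (m + 1), sStirling S m i * q.descFactorial i : ℕ) : ℚ) =
      (m.factorial : ℚ) * PowerSeries.coeff m ((ES S + 1) ^ q) := by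
  have e : ∀ i, ((sStirling S m i * q.descFactorial i : ℕ) : ℚ) =
      (m.factorial : ℚ) * (PowerSeries.coeff m (ES S ^ i) * (q.choose i : ℚ)) := by
    intro i
    rw [Nat.descFactorial_eq_factorial_mul_choose]
    push_cast
    linear_combination (q.choose i : ℚ) * sStirling_coeff S hS m i
  rw [Nat.cast_sum, Finset.sum_congr rfl fun i _ => e i, ← Finset.mul_sum, add_pow, map_sum]
  congr 1
  have e2 : ∀ i, PowerSeries.coeff m (ES S ^ i * 1 ^ (q - i) * (q.choose i : PowerSeries ℚ)) =
      PowerSeries.coeff m (ES S ^ i) * (q.choose i : ℚ) := by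
    intro i
    rw [one_pow, mul_one, ← map_natCast (PowerSeries.C (R := ℚ)), PowerSeries.coeff_mul_C]
  simp only [e2]
  have a1 : ∀ N, m + 1 ≤ N → ∑ i ∈ Finset.range (m + 1), PowerSeries.coeff m (ES S ^ i) * (q.choose i : ℚ)
      = ∑ i ∈ Finset.range N, PowerSeries.coeff m (ES S ^ i) * (q.choose i : ℚ) := by
    intro N hN
    refine Finset.sum_subset (Finset.range_mono hN) fun i _ hi => ?_
    have := ES_pow_mul_coeff S hS m i (by simpa using hi) 1
    rw [mul_one] at this
    rw [this, zero_mul]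
  have a2 : ∀ N, q + 1 ≤ N → ∑ i ∈ Finset.range (q + 1), PowerSeries.coeff m (ES S ^ i) * (q.choose i : ℚ)
      = ∑ i ∈ Finset.range N, PowerSeries.coeff m (ES S ^ i) * (q.choose i : ℚ) := by
    intro N hN
    refine Finset.sum_subset (Finset.range_mono hN) fun i _ hi => ?_
    rw [Nat.choose_eq_zero_of_lt (by simpa using hi), Nat.cast_zero, mul_zero]
  rw [a1 (m + q + 1) (by omega), a2 (m + q + 1) (by omega)]

theorem sFubini_poonen_identity (S : Set ℕ) (hS : 0 ∉ S) (n q : ℕ)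
    (hn : 0 < n) (hq : 0 < q) :
    2 ^ q * sFubini S n =
      (∑ l ∈ Finset.range (n + 1), n.choose l * sFubini S l *
        ∑ i ∈ Finset.range (n - l + 1), sStirling S (n - l) i * q.descFactorial i) +
      ∑ l ∈ Finset.Ico 1 q, 2 ^ (q - l - 1) *
        ∑ i ∈ Finset.range (n + 1), sStirling S n i * l.descFactorial i := by
  have main : PowerSeries.C ((2 : ℚ) ^ q) * (1 - ES S)⁻¹ = (1 - ES S)⁻¹ * (ES S + 1) ^ q +
      ∑ l ∈ Finset.range q, PowerSeries.C ((2 : ℚ) ^ (q - 1 - l)) * (ES S + 1) ^ l := by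
    have h := geom_sum₂_mul (ES S + 1) (2 : PowerSeries ℚ) q
    have h' := one_sub_ES S hS
    have e : ∀ j, PowerSeries.C ((2 : ℚ) ^ j) = (2 : PowerSeries ℚ) ^ j := by
      intro j; rw [map_pow, map_ofNat]
    have e3 : ∑ l ∈ Finset.range q, PowerSeries.C ((2 : ℚ) ^ (q - 1 - l)) * (ES S + 1) ^ l =
        ∑ l ∈ Finset.range q, (ES S + 1) ^ l * 2 ^ (q - 1 - l) :=
      Finset.sum_congr rfl fun l _ => by rw [e, mul_comm]
    rw [e3, e]
    linear_combination (1 - ES S)⁻¹ * h +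
      (∑ l ∈ Finset.range q, (ES S + 1) ^ l * 2 ^ (q - 1 - l)) * h'
  have hc := congrArg (fun G => (n.factorial : ℚ) * PowerSeries.coeff n G) main
  simp only [map_add, map_sum, PowerSeries.coeff_C_mul] at hc
  rw [PowerSeries.coeff_mul, Finset.Nat.sum_antidiagonal_eq_sum_range_succ_mk, mul_add,
    Finset.mul_sum, Finset.mul_sum, Finset.range_eq_Ico (a := q),
    Finset.sum_eq_sum_Ico_succ_bot hq, pow_zero, PowerSeries.coeff_one, if_neg hn.ne',
    mul_zero, mul_zero, zero_add] at hc
  have goalQ : ((2 ^ q * sFubini S n : ℕ) : ℚ) =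
      ((∑ l ∈ Finset.range (n + 1), n.choose l * sFubini S l *
        ∑ i ∈ Finset.range (n - l + 1), sStirling S (n - l) i * q.descFactorial i : ℕ) : ℚ) +
      ((∑ l ∈ Finset.Ico 1 q, 2 ^ (q - l - 1) *
        ∑ i ∈ Finset.range (n + 1), sStirling S n i * l.descFactorial i : ℕ) : ℚ) := by
    rw [Nat.cast_mul, sFubini_coeff S hS, Nat.cast_sum, Nat.cast_sum]
    rw [show (((2 ^ q : ℕ) : ℚ)) = 2 ^ q by push_cast; rfl]
    rw [show (2 : ℚ) ^ q * (n.factorial * PowerSeries.coeff n (1 - ES S)⁻¹) =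
      n.factorial * (2 ^ q * PowerSeries.coeff n (1 - ES S)⁻¹) by ring, hc]
    congr 1
    · refine Finset.sum_congr rfl fun l hl => ?_
      have hl' : l ≤ n := by simpa [Nat.lt_succ_iff] using hl
      rw [Nat.cast_mul, Nat.cast_mul, sFubini_coeff S hS, sumA_coeff S hS, Nat.cast_choose ℚ hl']
      field_simp
    · refine Finset.sum_congr rfl fun l _ => ?_
      rw [Nat.cast_mul, sumA_coeff S hS, show q - l - 1 = q - 1 - l by omega]
      push_cast
      ring
  exact_mod_cast goalQ
end

section
/- The double exponential generating function of the numbers L_{S_1,S_2}(n,k) of n x k (S_1,S_2)-restricted lonesum matrices without all-zero rows and columns is sum_{n,k} L_{S_1,S_2}(n,k) x^n y^k/(n! k!) = 1/(1 - E_{S_1}(x) E_{S_2}(y)). -/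
open scoped Classical

/-- A 0-1 matrix (with entries in `Bool`) is lonesum iff it avoids both `2×2`
permutation matrices as submatrices. -/
def IsLonesum {n k : ℕ} (M : Fin n → Fin k → Bool) : Prop :=
  ∀ i₁ i₂ : Fin n, ∀ j₁ j₂ : Fin k, i₁ ≠ i₂ → j₁ ≠ j₂ →
    ¬(M i₁ j₁ = true ∧ M i₂ j₂ = true ∧ M i₁ j₂ = false ∧ M i₂ j₁ = false)


/-- The formal power series `E_S` in the variable `i` of a two-variable power series
ring: the coefficient of a monomial is `1/s!` if the monomial is `x_i^s` with `s ∈ S`. -/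
noncomputable def ESmv (S : Set ℕ) (i : Fin 2) : MvPowerSeries (Fin 2) ℚ :=
  fun d => if d = Finsupp.single i (d i) ∧ d i ∈ S then ((d i).factorial : ℚ)⁻¹ else 0

/-- The number of `n × k` `(S₁,S₂)`-restricted lonesum matrices without all-zero rows
and columns. -/
noncomputable def lonesumCount (S₁ S₂ : Set ℕ) (n k : ℕ) : ℕ :=
  Nat.card {M : Fin n → Fin k → Bool // IsLonesum M ∧
    (∀ i, ∃ j, M i j = true) ∧ (∀ j, ∃ i, M i j = true) ∧
    (∀ i : Fin n, Nat.card {i' : Fin n // M i' = M i} ∈ S₁) ∧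
    (∀ j : Fin k, Nat.card {j' : Fin k // (fun i => M i j') = fun i => M i j} ∈ S₂)}

/-- The double exponential generating function of the matrix counts. -/
noncomputable def lonesumDEGF (S₁ S₂ : Set ℕ) : MvPowerSeries (Fin 2) ℚ :=
  fun d => (lonesumCount S₁ S₂ (d 0) (d 1) : ℚ) / ((d 0).factorial * (d 1).factorial)

/-- Lonesum conditions over arbitrary index types. -/
structure LGood (S₁ S₂ : Set ℕ) {α β : Type} (M : α → β → Bool) : Prop where
  lone : ∀ i₁ i₂ j₁ j₂, M i₁ j₁ = true → M i₂ j₂ = true → M i₁ j₂ = false →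
    M i₂ j₁ = false → False
  row : ∀ i, ∃ j, M i j = true
  col : ∀ j, ∃ i, M i j = true
  rc : ∀ i, Nat.card {i' // M i' = M i} ∈ S₁
  cc : ∀ j, Nat.card {j' // (fun i => M i j') = fun i => M i j} ∈ S₂

noncomputable def LCount (S₁ S₂ : Set ℕ) (α β : Type) : ℕ :=
  Nat.card {M : α → β → Bool // LGood S₁ S₂ M}

theorem lonesumCount_eq (S₁ S₂ : Set ℕ) (n k : ℕ) :
    lonesumCount S₁ S₂ n k = LCount S₁ S₂ (Fin n) (Fin k) := by
  unfold lonesumCount LCount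
  refine Nat.card_congr (Equiv.subtypeEquivRight fun M => ?_)
  constructor
  · rintro ⟨h1, h2, h3, h4, h5⟩
    refine ⟨fun i₁ i₂ j₁ j₂ a b c d => ?_, h2, h3, h4, h5⟩
    refine h1 i₁ i₂ j₁ j₂ ?_ ?_ ⟨a, b, c, d⟩
    · rintro rfl; simp_all
    · rintro rfl; simp_all
  · rintro ⟨h1, h2, h3, h4, h5⟩
    exact ⟨fun i₁ i₂ j₁ j₂ _ _ h => h1 i₁ i₂ j₁ j₂ h.1 h.2.1 h.2.2.1 h.2.2.2, h2, h3, h4, h5⟩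

theorem LGood.reindex {S₁ S₂ : Set ℕ} {α β α' β' : Type} (e : α' ≃ α) (f : β' ≃ β)
    {M : α → β → Bool} (h : LGood S₁ S₂ M) : LGood S₁ S₂ (fun i j => M (e i) (f j)) := by
  obtain ⟨h1, h2, h3, h4, h5⟩ := h
  refine ⟨fun i₁ i₂ j₁ j₂ a b c d => h1 _ _ _ _ a b c d, fun i => ?_, fun j => ?_,
    fun i => ?_, fun j => ?_⟩
  · obtain ⟨j, hj⟩ := h2 (e i)
    exact ⟨f.symm j, by simpa using hj⟩
  · obtain ⟨i, hi⟩ := h3 (f j)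
    exact ⟨e.symm i, by simpa using hi⟩
  · have := h4 (e i)
    rwa [← Nat.card_congr (Equiv.subtypeEquiv (p := fun i' => (fun j => M (e i') (f j)) =
      fun j => M (e i) (f j)) e fun a => ?_)] at this
    constructor
    · intro h; funext j; simpa using congrFun h (f.symm j)
    · intro h; funext j; rw [h]
  · have := h5 (f j)
    rwa [← Nat.card_congr (Equiv.subtypeEquiv (p := fun j' => (fun i => M (e i) (f j')) =
      fun i => M (e i) (f j)) f fun a => ?_)] at this
    constructor
    · intro h; funext i; simpa using congrFun h (e.symm i)
    · intro h; funext i; exact congrFun h (e i)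

theorem LCount_congr (S₁ S₂ : Set ℕ) {α β α' β' : Type} (e : α' ≃ α) (f : β' ≃ β) :
    LCount S₁ S₂ α β = LCount S₁ S₂ α' β' := by
  refine Nat.card_congr ⟨fun M => ⟨_, M.2.reindex e f⟩, fun M => ⟨_, M.2.reindex e.symm f.symm⟩,
    fun M => ?_, fun M => ?_⟩ <;> ext <;> simp

noncomputable def lfull {α β : Type} [Fintype α] (M : α → β → Bool) : Finset α :=
  Finset.univ.filter fun i => ∀ j, M i j = true

noncomputable def lmin {α β : Type} [Fintype α] [Fintype β] (M : α → β → Bool) : Finset β :=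
  Finset.univ.filter fun j => ∀ i, M i j = true → ∀ j', M i j' = true

noncomputable def lext {α β : Type} (A : Finset α) (B : Finset β)
    (M : {i // i ∉ A} → {j // j ∉ B} → Bool) : α → β → Bool :=
  fun i j => if hi : i ∈ A then true else if hj : j ∈ B then false else M ⟨i, hi⟩ ⟨j, hj⟩

theorem lext_A {α β : Type} {A : Finset α} {B : Finset β}
    (M : {i // i ∉ A} → {j // j ∉ B} → Bool) {i : α} (hi : i ∈ A) (j) : lext A B M i j = true := by
  simp [lext, hi]

theorem lext_B {α β : Type} {A : Finset α} {B : Finset β}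
    (M : {i // i ∉ A} → {j // j ∉ B} → Bool) {i : α} (hi : i ∉ A) {j} (hj : j ∈ B) :
    lext A B M i j = false := by
  simp [lext, hi, hj]

theorem lext_C {α β : Type} {A : Finset α} {B : Finset β}
    (M : {i // i ∉ A} → {j // j ∉ B} → Bool) {i : α} (hi : i ∉ A) {j} (hj : j ∉ B) :
    lext A B M i j = M ⟨i, hi⟩ ⟨j, hj⟩ := by
  simp [lext, hi, hj]

theorem LGood.exists_full {S₁ S₂ : Set ℕ} {α β : Type} [Fintype α] [Fintype β] [Nonempty α]
    {M : α → β → Bool} (h : LGood S₁ S₂ M) : ∃ i, ∀ j, M i j = true := by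
  obtain ⟨i, -, hi⟩ := Finset.exists_max_image (Finset.univ : Finset α)
    (fun i => (Finset.univ.filter fun j => M i j = true).card) Finset.univ_nonempty
  refine ⟨i, fun j => ?_⟩
  by_contra hj
  obtain ⟨i', hi'⟩ := h.col j
  refine absurd (hi i' (Finset.mem_univ _)) (not_le.2 (Finset.card_lt_card ?_))
  rw [Finset.ssubset_iff_of_subset]
  · exact ⟨j, by simpa using hi', by simpa using hj⟩
  · intro j2 h2
    simp only [Finset.mem_filter, Finset.mem_univ, true_and] at h2 ⊢
    by_contra h3
    exact h.lone i i' j2 j h2 hi' (by simpa using hj) (by simpa using h3)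

theorem LGood.exists_min {S₁ S₂ : Set ℕ} {α β : Type} [Fintype α] [Fintype β] [Nonempty β]
    {M : α → β → Bool} (h : LGood S₁ S₂ M) :
    ∃ j, ∀ i, M i j = true → ∀ j', M i j' = true := by
  obtain ⟨j, -, hj⟩ := Finset.exists_min_image (Finset.univ : Finset β)
    (fun j => (Finset.univ.filter fun i => M i j = true).card) Finset.univ_nonempty
  refine ⟨j, fun i hi j' => ?_⟩
  by_contra hj'
  refine absurd (hj j' (Finset.mem_univ _)) (not_le.2 (Finset.card_lt_card ?_))
  rw [Finset.ssubset_iff_of_subset]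
  · exact ⟨i, by simpa using hi, by simpa using hj'⟩
  · intro i2 h2
    simp only [Finset.mem_filter, Finset.mem_univ, true_and] at h2 ⊢
    by_contra h3
    exact h.lone i i2 j j' hi h2 (by simpa using hj') (by simpa using h3)

theorem LGood.card_full {S₁ S₂ : Set ℕ} {α β : Type} [Fintype α] [Fintype β] [Nonempty α]
    {M : α → β → Bool} (h : LGood S₁ S₂ M) : (lfull M).card ∈ S₁ := by
  obtain ⟨i, hi⟩ := h.exists_full
  have := h.rc i
  rw [Nat.card_eq_fintype_card, Fintype.card_subtype] at this
  convert this using 2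
  ext i'
  simp only [lfull, Finset.mem_filter, Finset.mem_univ, true_and]
  constructor
  · intro h; funext j; rw [h, hi]
  · intro h j; rw [h, hi]

theorem LGood.card_min {S₁ S₂ : Set ℕ} {α β : Type} [Fintype α] [Fintype β] [Nonempty β]
    {M : α → β → Bool} (h : LGood S₁ S₂ M) : (lmin M).card ∈ S₂ := by
  obtain ⟨j, hj⟩ := h.exists_min
  have := h.cc j
  rw [Nat.card_eq_fintype_card, Fintype.card_subtype] at this
  convert this using 2
  ext j'
  simp only [lmin, Finset.mem_filter, Finset.mem_univ, true_and]
  constructor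
  · intro h'
    funext i
    rw [Bool.eq_iff_iff]
    exact ⟨fun a => h' i a j, fun a => hj i a j'⟩
  · intro h' i hi
    exact hj i (by rw [← congrFun h' i]; exact hi)

theorem lext_restrict {α β : Type} [Fintype α] [Fintype β] (M : α → β → Bool) :
    lext (lfull M) (lmin M) (fun i j => M i j) = M := by
  funext i j
  by_cases hi : i ∈ lfull M
  · rw [lext_A _ hi]
    simp only [lfull, Finset.mem_filter, Finset.mem_univ, true_and] at hi
    rw [hi]
  by_cases hj : j ∈ lmin M
  · rw [lext_B _ hi hj]
    simp only [lfull, lmin, Finset.mem_filter, Finset.mem_univ, true_and] at hi hj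
    by_contra h
    exact hi (hj i (by simpa using Ne.symm h))
  · rw [lext_C _ hi hj]

section
variable {S₁ S₂ : Set ℕ} {α β : Type} [Fintype α] [Fintype β] {A : Finset α} {B : Finset β}
  {M : {i // i ∉ A} → {j // j ∉ B} → Bool}

theorem lfull_lext (hB : B.Nonempty) : lfull (lext A B M) = A := by
  ext i
  simp only [lfull, Finset.mem_filter, Finset.mem_univ, true_and]
  refine ⟨fun h => ?_, fun h j => lext_A _ h j⟩
  by_contra hi
  obtain ⟨j, hj⟩ := hB
  simpa [lext_B M hi hj] using h j

theorem lmin_lext (hB : B.Nonempty) (hc : ∀ j, ∃ i, M i j = true) :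
    lmin (lext A B M) = B := by
  ext j
  simp only [lmin, Finset.mem_filter, Finset.mem_univ, true_and]
  constructor
  · intro h
    by_contra hj
    obtain ⟨i, hi⟩ := hc ⟨j, hj⟩
    obtain ⟨j', hj'⟩ := hB
    have := h i.1 (by rw [lext_C M i.2 hj]; exact hi) j'
    simp [lext_B M i.2 hj'] at this
  · intro hj i hi j'
    by_cases hiA : i ∈ A
    · exact lext_A _ hiA _
    · simp [lext_B M hiA hj] at hi

theorem lext_row_iff {i i' : α} (hi : i ∉ A) (hi' : i' ∉ A) :
    lext A B M i' = lext A B M i ↔ M ⟨i', hi'⟩ = M ⟨i, hi⟩ := by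
  constructor
  · intro h
    funext j
    have := congrFun h j.1
    rwa [lext_C M hi j.2, lext_C M hi' j.2] at this
  · intro h
    funext j
    by_cases hj : j ∈ B
    · rw [lext_B M hi hj, lext_B M hi' hj]
    · rw [lext_C M hi hj, lext_C M hi' hj, h]

theorem lext_col_iff {j j' : β} (hj : j ∉ B) (hj' : j' ∉ B) :
    ((fun i => lext A B M i j') = fun i => lext A B M i j) ↔
      (fun i => M i ⟨j', hj'⟩) = fun i => M i ⟨j, hj⟩ := by
  constructor
  · intro h
    funext i
    have := congrFun h i.1
    simpa only [lext_C M i.2 hj, lext_C M i.2 hj'] using this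
  · intro h
    funext i
    by_cases hi : i ∈ A
    · rw [lext_A M hi, lext_A M hi]
    · rw [lext_C M hi hj, lext_C M hi hj']
      exact congrFun h ⟨i, hi⟩

theorem row_card (hB : B.Nonempty) {i : α} (hi : i ∉ A) :
    Nat.card {i' // lext A B M i' = lext A B M i} = Nat.card {i' // M i' = M ⟨i, hi⟩} := by
  have key : ∀ x, lext A B M x = lext A B M i → x ∉ A := by
    intro x hx hxA
    obtain ⟨j, hj⟩ := hB
    have := congrFun hx j
    simp [lext_A M hxA, lext_B M hi hj] at this
  rw [← Nat.card_congr (Equiv.subtypeSubtypeEquivSubtype (fun {x} => key x))]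
  exact Nat.card_congr (Equiv.subtypeEquivRight fun x => lext_row_iff hi x.2)

theorem col_card (hc : ∀ j, ∃ i, M i j = true) {j : β} (hj : j ∉ B) :
    Nat.card {j' // (fun i => lext A B M i j') = fun i => lext A B M i j} =
      Nat.card {j' // (fun i => M i j') = fun i => M i ⟨j, hj⟩} := by
  have key : ∀ x, ((fun i => lext A B M i x) = fun i => lext A B M i j) → x ∉ B := by
    intro x hx hxB
    obtain ⟨i, hi⟩ := hc ⟨j, hj⟩
    have := congrFun hx i.1
    simp [lext_B M i.2 hxB, lext_C M i.2 hj, hi] at this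
  rw [← Nat.card_congr (Equiv.subtypeSubtypeEquivSubtype (fun {x} => key x))]
  exact Nat.card_congr (Equiv.subtypeEquivRight fun x => lext_col_iff hj x.2)

theorem LGood_lext (hA : A.Nonempty) (hB : B.Nonempty) (hA1 : A.card ∈ S₁) (hB1 : B.card ∈ S₂)
    (h : LGood S₁ S₂ M) : LGood S₁ S₂ (lext A B M) := by
  refine ⟨fun i₁ i₂ j₁ j₂ a b c d => ?_, fun i => ?_, fun j => ?_, fun i => ?_, fun j => ?_⟩
  · have h1 : i₁ ∉ A := fun h => by simp [lext_A M h] at c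
    have h2 : i₂ ∉ A := fun h => by simp [lext_A M h] at d
    have h3 : j₁ ∉ B := fun h => by simp [lext_B M h1 h] at a
    have h4 : j₂ ∉ B := fun h => by simp [lext_B M h2 h] at b
    rw [lext_C M ‹_› ‹_›] at a b c d
    exact h.lone _ _ _ _ a b c d
  · by_cases hi : i ∈ A
    · exact ⟨hB.choose, lext_A M hi _⟩
    · obtain ⟨j, hj⟩ := h.row ⟨i, hi⟩
      exact ⟨j.1, by rw [lext_C M hi j.2]; exact hj⟩
  · exact ⟨hA.choose, lext_A M hA.choose_spec _⟩
  · by_cases hi : i ∈ A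
    · rw [Nat.card_eq_fintype_card, Fintype.card_subtype]
      convert hA1 using 2
      conv_rhs => rw [← lfull_lext (M := M) hB]
      ext i'
      simp only [lfull, Finset.mem_filter, Finset.mem_univ, true_and]
      constructor
      · intro h j; rw [h, lext_A M hi]
      · intro h; funext j; rw [h, lext_A M hi]
    · rw [row_card hB hi]
      exact h.rc _
  · by_cases hj : j ∈ B
    · rw [Nat.card_eq_fintype_card, Fintype.card_subtype]
      convert hB1 using 2
      ext j'
      simp only [Finset.mem_filter, Finset.mem_univ, true_and]
      constructor
      · intro h'
        by_contra hj'
        obtain ⟨i, hi⟩ := h.col ⟨j', hj'⟩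
        have := congrFun h' i.1
        simp [lext_B M i.2 hj, lext_C M i.2 hj', hi] at this
      · intro hj'
        funext i
        by_cases hi : i ∈ A
        · rw [lext_A M hi, lext_A M hi]
        · rw [lext_B M hi hj, lext_B M hi hj']
    · rw [col_card h.col hj]
      exact h.cc _

theorem LGood_of_lext (hA : A.Nonempty) (hB : B.Nonempty) (hm : lmin (lext A B M) = B)
    (h : LGood S₁ S₂ (lext A B M)) : LGood S₁ S₂ M := by
  have hc : ∀ j, ∃ i, M i j = true := by
    intro j
    by_contra hj
    push Not at hj
    apply j.2
    refine (Finset.ext_iff.1 hm j.1).1 ?_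
    simp only [lmin, Finset.mem_filter, Finset.mem_univ, true_and]
    intro i hi
    by_cases hiA : i ∈ A
    · exact fun j' => lext_A _ hiA _
    · rw [lext_C M hiA j.2] at hi
      exact absurd hi (hj _)
  refine ⟨fun i₁ i₂ j₁ j₂ a b c d => ?_, fun i => ?_, hc, fun i => ?_, fun j => ?_⟩
  · refine h.lone i₁.1 i₂.1 j₁.1 j₂.1 ?_ ?_ ?_ ?_
    · rw [lext_C M i₁.2 j₁.2]; exact a
    · rw [lext_C M i₂.2 j₂.2]; exact b
    · rw [lext_C M i₁.2 j₂.2]; exact c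
    · rw [lext_C M i₂.2 j₁.2]; exact d
  · obtain ⟨j, hj⟩ := h.row i.1
    have hjB : j ∉ B := fun h => by simp [lext_B M i.2 h] at hj
    exact ⟨⟨j, hjB⟩, by rw [lext_C M i.2 hjB] at hj; exact hj⟩
  · rw [← row_card hB i.2]; exact h.rc _
  · rw [← col_card hc j.2]; exact h.cc _

end

theorem LCount_rec (S₁ S₂ : Set ℕ) (h₁ : 0 ∉ S₁) (h₂ : 0 ∉ S₂) (α β : Type) [Fintype α]
    [Fintype β] (hne : Nonempty α ∨ Nonempty β) :
    LCount S₁ S₂ α β = ∑ A : Finset α, ∑ B : Finset β,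
      if A.card ∈ S₁ ∧ B.card ∈ S₂ then LCount S₁ S₂ {i // i ∉ A} {j // j ∉ B} else 0 := by
  have hn : ∀ M : α → β → Bool, LGood S₁ S₂ M → Nonempty α ∧ Nonempty β := by
    intro M h
    rcases hne with ⟨⟨i⟩⟩ | ⟨⟨j⟩⟩
    · exact ⟨⟨i⟩, ⟨(h.row i).choose⟩⟩
    · exact ⟨⟨(h.col j).choose⟩, ⟨j⟩⟩
  unfold LCount
  simp only [Nat.card_eq_fintype_card, Fintype.card_subtype]
  rw [← Fintype.sum_prod_type', Finset.card_eq_sum_card_fiberwise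
    (f := fun M => (lfull M, lmin M)) (t := Finset.univ) (by simp)]
  refine Finset.sum_congr rfl ?_
  rintro ⟨A, B⟩ -
  dsimp only
  split_ifs with h
  · have hA : A.Nonempty := by
      rw [Finset.nonempty_iff_ne_empty]; rintro rfl; exact h₁ (by simpa using h.1)
    have hB : B.Nonempty := by
      rw [Finset.nonempty_iff_ne_empty]; rintro rfl; exact h₂ (by simpa using h.2)
    symm
    refine Finset.card_nbij' (fun M => lext A B M) (fun M i j => M i j) ?_ ?_ ?_ ?_
    · intro M hM
      simp only [Finset.coe_filter, Finset.mem_univ, true_and, Set.mem_ofPred_eq,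
        Finset.mem_filter, Prod.mk.injEq] at hM ⊢
      exact ⟨LGood_lext hA hB h.1 h.2 hM, lfull_lext hB, lmin_lext hB hM.col⟩
    · intro M hM
      simp only [Finset.coe_filter, Finset.mem_univ, true_and, Set.mem_ofPred_eq,
        Finset.mem_filter, Prod.mk.injEq] at hM ⊢
      obtain ⟨hM, rfl, rfl⟩ := hM
      refine LGood_of_lext hA hB ?_ ?_ <;> rw [lext_restrict]
      exact hM
    · intro M hM
      funext i j
      exact lext_C M i.2 j.2
    · intro M hM
      simp only [Finset.coe_filter, Finset.mem_univ, true_and, Set.mem_ofPred_eq,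
        Finset.mem_filter, Prod.mk.injEq] at hM
      obtain ⟨hM, rfl, rfl⟩ := hM
      exact lext_restrict M
  · rw [Finset.card_eq_zero, Finset.eq_empty_iff_forall_notMem]
    intro M hM
    simp only [Finset.mem_univ, true_and, Finset.mem_filter, Prod.mk.injEq] at hM
    obtain ⟨hM, rfl, rfl⟩ := hM
    obtain ⟨_, _⟩ := hn M hM
    exact h ⟨hM.card_full, hM.card_min⟩

theorem lonesumCount_rec (S₁ S₂ : Set ℕ) (h₁ : 0 ∉ S₁) (h₂ : 0 ∉ S₂) (n k : ℕ)
    (hne : n ≠ 0 ∨ k ≠ 0) :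
    lonesumCount S₁ S₂ n k = ∑ s ∈ Finset.range (n + 1), ∑ t ∈ Finset.range (k + 1),
      n.choose s * (k.choose t *
        if s ∈ S₁ ∧ t ∈ S₂ then lonesumCount S₁ S₂ (n - s) (k - t) else 0) := by
  have e : ∀ (m : ℕ) (A : Finset (Fin m)), Nonempty (Fin (m - A.card) ≃ {i // i ∉ A}) := by
    intro m A
    rw [← Fintype.card_eq]
    simp [Fintype.card_subtype_compl]
  rw [lonesumCount_eq, LCount_rec S₁ S₂ h₁ h₂ _ _ (by
    rcases hne with h | h
    · exact Or.inl ⟨⟨0, Nat.pos_of_ne_zero h⟩⟩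
    · exact Or.inr ⟨⟨0, Nat.pos_of_ne_zero h⟩⟩)]
  have : ∀ A : Finset (Fin n), (∑ B : Finset (Fin k),
      if A.card ∈ S₁ ∧ B.card ∈ S₂ then LCount S₁ S₂ {i // i ∉ A} {j // j ∉ B} else 0) =
      (fun s => ∑ t ∈ Finset.range (k + 1), (k.choose t *
        if s ∈ S₁ ∧ t ∈ S₂ then lonesumCount S₁ S₂ (n - s) (k - t) else 0)) A.card := by
    intro A
    have := Finset.sum_powerset_apply_card (fun t =>
        if A.card ∈ S₁ ∧ t ∈ S₂ then lonesumCount S₁ S₂ (n - A.card) (k - t) else 0)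
        (x := (Finset.univ : Finset (Fin k)))
    simp only [Finset.powerset_univ, Finset.card_univ, Fintype.card_fin, smul_eq_mul] at this
    refine Eq.trans ?_ this
    refine Finset.sum_congr rfl fun B _ => ?_
    rw [lonesumCount_eq, LCount_congr S₁ S₂ (e n A).some (e k B).some]
  rw [Finset.sum_congr rfl fun A _ => this A]
  have := Finset.sum_powerset_apply_card (fun s => ∑ t ∈ Finset.range (k + 1), (k.choose t *
        if s ∈ S₁ ∧ t ∈ S₂ then lonesumCount S₁ S₂ (n - s) (k - t) else 0))
        (x := (Finset.univ : Finset (Fin n)))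
  simp only [Finset.powerset_univ, Finset.card_univ, Fintype.card_fin, smul_eq_mul] at this
  rw [this]
  simp only [Finset.mul_sum]

theorem lonesumCount_zero (S₁ S₂ : Set ℕ) : lonesumCount S₁ S₂ 0 0 = 1 := by
  rw [lonesumCount_eq, LCount, Nat.card_eq_one_iff_unique]
  refine ⟨⟨fun a b => Subtype.ext (funext fun i => i.elim0)⟩,
    ⟨⟨fun i => i.elim0, ⟨fun i => i.elim0, fun i => i.elim0, fun i => i.elim0,
      fun i => i.elim0, fun i => i.elim0⟩⟩⟩⟩

/-- The exponent `(a, b)`. -/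
noncomputable def lexp (a b : ℕ) : Fin 2 →₀ ℕ := Finsupp.equivFunOnFinite.symm ![a, b]

@[simp] theorem lexp_zero (a b : ℕ) : lexp a b 0 = a := by simp [lexp]
@[simp] theorem lexp_one (a b : ℕ) : lexp a b 1 = b := by simp [lexp]

theorem sum_antidiag (d : Fin 2 →₀ ℕ) (f : (Fin 2 →₀ ℕ) → (Fin 2 →₀ ℕ) → ℚ) :
    ∑ p ∈ Finset.HasAntidiagonal.antidiagonal d, f p.1 p.2 =
      ∑ s ∈ Finset.range (d 0 + 1), ∑ t ∈ Finset.range (d 1 + 1),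
        f (lexp (d 0 - s) (d 1 - t)) (lexp s t) := by
  rw [← Finset.sum_product']
  refine Finset.sum_nbij' (fun p => (p.2 0, p.2 1))
    (fun q => (lexp (d 0 - q.1) (d 1 - q.2), lexp q.1 q.2)) ?_ ?_ ?_ ?_ ?_
  · rintro ⟨p, q⟩ h
    rw [Finset.HasAntidiagonal.mem_antidiagonal] at h
    subst h
    simp
  · rintro ⟨s, t⟩ h
    simp only [Finset.mem_product, Finset.mem_range] at h
    rw [Finset.HasAntidiagonal.mem_antidiagonal]
    ext i
    fin_cases i <;> simp <;> omega
  · rintro ⟨p, q⟩ h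
    rw [Finset.HasAntidiagonal.mem_antidiagonal] at h
    subst h
    refine Prod.ext ?_ ?_ <;> ext i <;> fin_cases i <;> simp
  · rintro ⟨s, t⟩ h
    simp
  · rintro ⟨p, q⟩ h
    rw [Finset.HasAntidiagonal.mem_antidiagonal] at h
    subst h
    congr 1 <;> ext i <;> fin_cases i <;> simp

theorem lexp_single0 (a b : ℕ) : lexp a b = Finsupp.single 0 a ↔ b = 0 := by
  constructor
  · intro h
    simpa using DFunLike.congr_fun h 1
  · rintro rfl
    ext i
    fin_cases i <;> simp

theorem lexp_single1 (a b : ℕ) : lexp a b = Finsupp.single 1 b ↔ a = 0 := by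
  constructor
  · intro h
    simpa using DFunLike.congr_fun h 0
  · rintro rfl
    ext i
    fin_cases i <;> simp

theorem coeff_ESprod (S₁ S₂ : Set ℕ) (d : Fin 2 →₀ ℕ) :
    MvPowerSeries.coeff d (ESmv S₁ 0 * ESmv S₂ 1) =
      if d 0 ∈ S₁ ∧ d 1 ∈ S₂ then ((d 0).factorial : ℚ)⁻¹ * ((d 1).factorial : ℚ)⁻¹ else 0 := by
  rw [MvPowerSeries.coeff_mul, sum_antidiag d (fun p q =>
    MvPowerSeries.coeff p (ESmv S₁ 0) * MvPowerSeries.coeff q (ESmv S₂ 1))]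
  simp only [MvPowerSeries.coeff_apply, ESmv, lexp_zero, lexp_one, lexp_single0, lexp_single1]
  rw [Finset.sum_eq_single 0, Finset.sum_eq_single (d 1)]
  · by_cases a : d 0 ∈ S₁ <;> by_cases b : d 1 ∈ S₂ <;> simp [a, b]
  · intro t ht hne
    rw [if_neg, zero_mul]
    rintro ⟨h, -⟩
    rw [Finset.mem_range] at ht
    omega
  · simp
  · intro s hs hne
    refine Finset.sum_eq_zero fun t _ => ?_
    simp [hne]
  · simp

/-- the double EGF of `(S₁,S₂)`-restricted lonesum matrices without
all-zero rows and columns is `1 / (1 - E_{S₁}(x) E_{S₂}(y))`. -/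
theorem restricted_lonesum_degf (S₁ S₂ : Set ℕ) (h₁ : 0 ∉ S₁) (h₂ : 0 ∉ S₂) :
    lonesumDEGF S₁ S₂ * (1 - ESmv S₁ 0 * ESmv S₂ 1) = 1 := by
  rw [mul_sub, mul_one, sub_eq_iff_eq_add]
  ext d
  rw [map_add, MvPowerSeries.coeff_mul, sum_antidiag d (fun p q =>
    MvPowerSeries.coeff p (lonesumDEGF S₁ S₂) * MvPowerSeries.coeff q (ESmv S₁ 0 * ESmv S₂ 1))]
  simp only [coeff_ESprod]
  simp only [MvPowerSeries.coeff_apply (lonesumDEGF S₁ S₂), lonesumDEGF, lexp_zero, lexp_one,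
    MvPowerSeries.coeff_one]
  by_cases hd : d = 0
  · subst hd
    simp [lonesumCount_zero, h₁]
  · rw [if_neg hd, zero_add, lonesumCount_rec S₁ S₂ h₁ h₂ (d 0) (d 1) (by
      by_contra! h
      apply hd
      ext i
      fin_cases i
      · exact h.1
      · exact h.2)]
    push_cast
    rw [Finset.sum_div]
    refine Finset.sum_congr rfl fun s hs => ?_
    rw [Finset.sum_div]
    refine Finset.sum_congr rfl fun t ht => ?_
    rw [Finset.mem_range] at hs ht
    rw [Nat.cast_choose ℚ (by omega : s ≤ d 0), Nat.cast_choose ℚ (by omega : t ≤ d 1)]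
    have f : ∀ n : ℕ, (n.factorial : ℚ) ≠ 0 := fun n => by exact_mod_cast n.factorial_ne_zero
    have := f (d 0)
    have := f (d 1)
    have := f s
    have := f t
    have := f (d 0 - s)
    have := f (d 1 - t)
    split_ifs
    · field_simp
    · simp
end
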